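/- arXiv:2210.15711 — 5 statements merged into one kernel-verified Lean document; each statement's English description precedes it below -/
import Mathlib

section
/- Let A, Add, Del, Add', Del' be sets with Add ∩ A = ∅, Del ⊆ A, B = (A \ Del) ∪ Add, Add' ∩ B = ∅, and Del' ⊆ B, and let C = (B \ Del') ∪ Add'. Then the composite update computed by the formulas Add'' = (Add' ∪ Add) \ Del' and Del'' = (Del' ∪ Del) \ Add' applied to A yields C: (A \ ((Del' ∪ Del) \ Add')) ∪ ((Add' ∪ Add) \ Del') = C. -/
/-- The composite update computed by `Add'' = (Add' ∪ Add) \ Del'` and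
`Del'' = (Del' ∪ Del) \ Add'` applied to `A` yields `C`. -/
theorem composite_update {α : Type*} (A Add Del B Add' Del' C : Set α)
    (hAdd : Add ∩ A = ∅) (hDel : Del ⊆ A) (hB : B = (A \ Del) ∪ Add)
    (hAdd' : Add' ∩ B = ∅) (hDel' : Del' ⊆ B) (hC : C = (B \ Del') ∪ Add') :
    (A \ ((Del' ∪ Del) \ Add')) ∪ ((Add' ∪ Add) \ Del') = C := by
  subst hB hC
  ext x
  have disjoint_at : x ∈ Add' → x ∉ (A \ Del) ∪ Add := fun h h' =>
    Set.eq_empty_iff_forall_notMem.mp hAdd' x ⟨h, h'⟩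
  have del_at := @hDel' x
  simp only [Set.mem_union, Set.mem_sdiff] at *
  tauto
end

section
/- Let f : S → V be a view, U a nonempty complete set of updates on V (closed under composition, and for every u ∈ U and v ∈ V there exists g ∈ U with g(u(v)) = v), and T a translator for f and U (T(u ∘ v) = T(u) ∘ T(v), and for all u ∈ U and s ∈ S, u(f(s)) = f(s) implies T(u)(s) = s). Define the relation s ≡ s' on S by: s ≡ s' iff there exists u ∈ U with s = T(u)(s'). Then ≡ is an equivalence relation (reflexive, symmetric, and transitive). -/
/-- The relation `s ≡ s'` iff `∃ u ∈ U, s = T u s'` induced by a translator for a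
nonempty complete set of view updates is an equivalence relation. -/
theorem translator_equivalence {S V : Type*} (f : S → V) (U : Set (V → V))
    (hne : U.Nonempty)
    (hcomp : ∀ u ∈ U, ∀ v ∈ U, u ∘ v ∈ U)
    (hinv : ∀ u ∈ U, ∀ v : V, ∃ g ∈ U, g (u v) = v)
    (T : (V → V) → (S → S))
    (hfunct : ∀ u ∈ U, ∀ v ∈ U, T (u ∘ v) = T u ∘ T v)
    (htrans : ∀ u ∈ U, ∀ s : S, u (f s) = f s → T u s = s) :
    Equivalence (fun s s' : S => ∃ u ∈ U, s = T u s') := by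
  have left_inv : ∀ u ∈ U, ∀ s : S, ∃ g ∈ U, T g (T u s) = s := by
    intro u hu s
    obtain ⟨g, hg, hgu⟩ := hinv u hu (f s)
    refine ⟨g, hg, ?_⟩
    have h := htrans (g ∘ u) (hcomp g hg u hu) s hgu
    rwa [hfunct g hg u hu] at h
  refine ⟨fun s => ?_, ?_, ?_⟩
  · obtain ⟨u, hu⟩ := hne
    obtain ⟨g, hg, h⟩ := left_inv u hu s
    exact ⟨g ∘ u, hcomp g hg u hu, by rw [hfunct g hg u hu, Function.comp_apply, h]⟩
  · rintro _ s ⟨u, hu, rfl⟩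
    obtain ⟨g, hg, h⟩ := left_inv u hu s
    exact ⟨g, hg, h.symm⟩
  · rintro _ _ s ⟨u, hu, rfl⟩ ⟨v, hv, rfl⟩
    exact ⟨u ∘ v, hcomp u hu v hv, by rw [hfunct u hu v hv, Function.comp_apply]⟩
end

section
/- Let α be a predicate on tuples, and let s, s' be sets of tuples. Then {x ∈ s | ¬α x} = {x ∈ s' | ¬α x} if and only if there exist sets A and D of tuples, all of whose elements satisfy α, such that s' = (s \ D) ∪ A. (The equivalence classes of base states under translated selection-view updates are in one-to-one correspondence with the states of the selection complement.) -/
/-- Two base states have the same selection complement iff one is obtained from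
the other by a translated selection-view update. -/
theorem selection_equivalence_classes {α : Type*} (p : α → Prop) (s s' : Set α) :
    {x ∈ s | ¬ p x} = {x ∈ s' | ¬ p x} ↔
      ∃ A D : Set α, (∀ x ∈ A, p x) ∧ (∀ x ∈ D, p x) ∧ s' = (s \ D) ∪ A := by
  constructor
  · intro h
    refine ⟨{x ∈ s' | p x}, {x ∈ s | p x}, fun x hx => hx.2, fun x hx => hx.2, ?_⟩
    ext x
    have hx : x ∈ s ∧ ¬ p x ↔ x ∈ s' ∧ ¬ p x := Set.ext_iff.mp h x
    simp only [Set.mem_union, Set.mem_sdiff, Set.mem_ofPred_eq]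
    tauto
  · rintro ⟨A, D, hA, hD, rfl⟩
    ext x
    have hAx := hA x
    have hDx := hD x
    simp only [Set.mem_union, Set.mem_sdiff, Set.mem_ofPred_eq]
    tauto
end

section
/- Let K, A, B be types where A and B each have a distinguished null value. Let t and t' be sets of triples in K × A × B such that: (i) each is functional in the key, i.e. if (k, a, b) and (k, a', b') belong to the set then a = a' and b = b'; and (ii) no row has both attributes null, i.e. (k, a, b) in the set implies a ≠ null or b ≠ null. Define the view v(t) = {(k, a) | ∃b, (k, a, b) ∈ t and a ≠ null} and the complement c(t) = {(k, b) | ∃a, (k, a, b) ∈ t and b ≠ null}. If v(t) = v(t') and c(t) = c(t'), then t = t'. (The null-excluding projection onto K, B is a complement of the null-excluding projection onto K, A.) -/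
/-- A key-functional table without all-null rows is contained in every key-functional table
with the same null-excluding projections. -/
theorem subset_of_projections_eq {K A B : Type*} {nullA : A} {nullB : B}
    {t t' : Set (K × A × B)}
    (hfun : ∀ k a b a' b', (k, a, b) ∈ t → (k, a', b') ∈ t → a = a' ∧ b = b')
    (hfun' : ∀ k a b a' b', (k, a, b) ∈ t' → (k, a', b') ∈ t' → a = a' ∧ b = b')
    (hnn : ∀ k a b, (k, a, b) ∈ t → a ≠ nullA ∨ b ≠ nullB)
    (hv : {q : K × A | ∃ b, (q.1, q.2, b) ∈ t ∧ q.2 ≠ nullA} =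
          {q : K × A | ∃ b, (q.1, q.2, b) ∈ t' ∧ q.2 ≠ nullA})
    (hc : {q : K × B | ∃ a, (q.1, a, q.2) ∈ t ∧ q.2 ≠ nullB} =
          {q : K × B | ∃ a, (q.1, a, q.2) ∈ t' ∧ q.2 ≠ nullB}) :
    t ⊆ t' := by
  rintro ⟨k, a, b⟩ h
  have hA : ∀ x, (∃ y, (k, x, y) ∈ t ∧ x ≠ nullA) ↔ ∃ y, (k, x, y) ∈ t' ∧ x ≠ nullA :=
    fun x => Set.ext_iff.mp hv (k, x)
  have hB : ∀ y, (∃ x, (k, x, y) ∈ t ∧ y ≠ nullB) ↔ ∃ x, (k, x, y) ∈ t' ∧ y ≠ nullB :=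
    fun y => Set.ext_iff.mp hc (k, y)
  by_cases ha : a = nullA
  · have hb : b ≠ nullB := (hnn k a b h).resolve_left (not_not.mpr ha)
    obtain ⟨x, hx, -⟩ := (hB b).mp ⟨a, h, hb⟩
    by_cases hxn : x = nullA
    · rwa [ha, ← hxn]
    · obtain ⟨y, hy, -⟩ := (hA x).mpr ⟨b, hx, hxn⟩
      rwa [(hfun k a b x y h hy).1]
  · obtain ⟨y, hy, -⟩ := (hA a).mp ⟨b, h, ha⟩
    by_cases hb : b = nullB
    · by_cases hyn : y = nullB
      · rwa [hb, ← hyn]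
      · obtain ⟨x, hx, -⟩ := (hB y).mpr ⟨a, hy, hyn⟩
        rwa [(hfun k a b x y h hx).2]
    · obtain ⟨x, hx, -⟩ := (hB b).mp ⟨a, h, hb⟩
      rwa [(hfun' k x b a y hx hy).2]

/-- The null-excluding projection onto columns K, B is a complement of the
null-excluding projection onto columns K, A. -/
theorem projection_complement {K A B : Type*} (nullA : A) (nullB : B)
    (t t' : Set (K × A × B))
    (hfun : ∀ k a b a' b', (k, a, b) ∈ t → (k, a', b') ∈ t → a = a' ∧ b = b')
    (hfun' : ∀ k a b a' b', (k, a, b) ∈ t' → (k, a', b') ∈ t' → a = a' ∧ b = b')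
    (hnn : ∀ k a b, (k, a, b) ∈ t → a ≠ nullA ∨ b ≠ nullB)
    (hnn' : ∀ k a b, (k, a, b) ∈ t' → a ≠ nullA ∨ b ≠ nullB)
    (hv : {q : K × A | ∃ b, (q.1, q.2, b) ∈ t ∧ q.2 ≠ nullA} =
          {q : K × A | ∃ b, (q.1, q.2, b) ∈ t' ∧ q.2 ≠ nullA})
    (hc : {q : K × B | ∃ a, (q.1, a, q.2) ∈ t ∧ q.2 ≠ nullB} =
          {q : K × B | ∃ a, (q.1, a, q.2) ∈ t' ∧ q.2 ≠ nullB}) :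
    t = t' := by
  exact Set.Subset.antisymm (subset_of_projections_eq hfun hfun' hnn hv hc)
    (subset_of_projections_eq hfun' hfun hnn' hv.symm hc.symm)
end

section
/- Let P ⊆ K × A and C ⊆ K × B with the integrity constraint that for every (k, b) ∈ C there exists a with (k, a) ∈ P, and define J = {(k, a, b) | (k, a) ∈ P, (k, b) ∈ C} and Comp = {(k, a) ∈ P | ¬∃b, (k, b) ∈ C}. Then: (1) the projection of J onto the parent columns is disjoint from Comp, i.e. {(k, a) | ∃b, (k, a, b) ∈ J} ∩ Comp = ∅ (the decomposition is perfect); and (2) the map (P, C) ↦ (J, Comp) is injective on pairs satisfying the integrity constraint, i.e. Comp is a complement of the hierarchical join view. -/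
/-- The parent table is bounded by any parent table whose join and childless rows
contain its own. -/
theorem parent_subset_of_join_subset {K A B : Type*} {P P' : Set (K × A)} {C C' : Set (K × B)}
    (hJ : {r : K × A × B | (r.1, r.2.1) ∈ P ∧ (r.1, r.2.2) ∈ C} ⊆
      {r : K × A × B | (r.1, r.2.1) ∈ P' ∧ (r.1, r.2.2) ∈ C'})
    (hComp : {q ∈ P | ¬ ∃ b, (q.1, b) ∈ C} ⊆ {q ∈ P' | ¬ ∃ b, (q.1, b) ∈ C'}) :
    P ⊆ P' := by
  rintro ⟨k, a⟩ hP
  by_cases h : ∃ b, (k, b) ∈ C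
  · obtain ⟨b, hb⟩ := h
    exact (@hJ (k, a, b) ⟨hP, hb⟩).1
  · exact (@hComp (k, a) ⟨hP, h⟩).1

/-- Under referential integrity, the child table is bounded by any child table whose join
contains its own. -/
theorem child_subset_of_join_subset {K A B : Type*} {P P' : Set (K × A)} {C C' : Set (K × B)}
    (hC : ∀ k b, (k, b) ∈ C → ∃ a, (k, a) ∈ P)
    (hJ : {r : K × A × B | (r.1, r.2.1) ∈ P ∧ (r.1, r.2.2) ∈ C} ⊆
      {r : K × A × B | (r.1, r.2.1) ∈ P' ∧ (r.1, r.2.2) ∈ C'}) :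
    C ⊆ C' := by
  rintro ⟨k, b⟩ hb
  obtain ⟨a, ha⟩ := hC k b hb
  exact (@hJ (k, a, b) ⟨ha, hb⟩).2

/-- The hierarchical join decomposition is perfect, and the childless parent rows
form a complement of the hierarchical join view. -/
theorem hierarchical_join_complement {K A B : Type*} :
    (∀ (P : Set (K × A)) (C : Set (K × B)),
      (∀ k b, (k, b) ∈ C → ∃ a, (k, a) ∈ P) →
      {q : K × A | ∃ b, (q.1, q.2, b) ∈
          {r : K × A × B | (r.1, r.2.1) ∈ P ∧ (r.1, r.2.2) ∈ C}} ∩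
        {q ∈ P | ¬ ∃ b, (q.1, b) ∈ C} = ∅) ∧
    (∀ (P P' : Set (K × A)) (C C' : Set (K × B)),
      (∀ k b, (k, b) ∈ C → ∃ a, (k, a) ∈ P) →
      (∀ k b, (k, b) ∈ C' → ∃ a, (k, a) ∈ P') →
      {r : K × A × B | (r.1, r.2.1) ∈ P ∧ (r.1, r.2.2) ∈ C} =
        {r : K × A × B | (r.1, r.2.1) ∈ P' ∧ (r.1, r.2.2) ∈ C'} →
      {q ∈ P | ¬ ∃ b, (q.1, b) ∈ C} = {q ∈ P' | ¬ ∃ b, (q.1, b) ∈ C'} →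
      P = P' ∧ C = C') := by
  refine ⟨fun P C _ => ?_, fun P P' C C' hC hC' hJ hComp => ⟨?_, ?_⟩⟩
  · rw [Set.eq_empty_iff_forall_notMem]
    rintro q ⟨⟨b, -, hb⟩, -, hq⟩
    exact hq ⟨b, hb⟩
  · exact (parent_subset_of_join_subset hJ.subset hComp.subset).antisymm
      (parent_subset_of_join_subset hJ.superset hComp.superset)
  · exact (child_subset_of_join_subset hC hJ.subset).antisymm
      (child_subset_of_join_subset hC' hJ.superset)
end
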